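/- Let p, q be positive real numbers with 1/p + 1/q = 1, and let X, Y ∈ Mₙ(ℂ). There exists a unitary matrix U ∈ Mₙ(ℂ) with U |XY*| U* = p⁻¹ |X|ᵖ + q⁻¹ |Y|^q if and only if |Y|^q = |X|ᵖ. -/

import Mathlib

open scoped ComplexOrder
open Matrix

/-- The positive semidefinite square root of a positive semidefinite matrix (Mathlib's former
`Matrix.PosSemidef.sqrt`, with its old definition). -/
noncomputable def Matrix.PosSemidef.sqrt {n 𝕜 : Type*} [Fintype n] [RCLike 𝕜] [DecidableEq n]
    {A : Matrix n n 𝕜} (hA : PosSemidef A) : Matrix n n 𝕜 :=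
  hA.1.eigenvectorUnitary.1 * diagonal ((↑) ∘ Real.sqrt ∘ hA.1.eigenvalues) *
  (star hA.1.eigenvectorUnitary : Matrix n n 𝕜)

/-- The absolute value `|Z| = (Zᴴ Z)^(1/2)` of a square complex matrix. -/
noncomputable def matAbs {n : ℕ} (Z : Matrix (Fin n) (Fin n) ℂ) : Matrix (Fin n) (Fin n) ℂ :=
  (Matrix.posSemidef_conjTranspose_mul_self Z).sqrt

/-- Real powers of a positive semidefinite (in particular, Hermitian) matrix, obtained by
applying `t ↦ t ^ r` to the eigenvalues; junk value `0` on non-Hermitian matrices. -/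
noncomputable def matRpow {n : ℕ} (A : Matrix (Fin n) (Fin n) ℂ) (r : ℝ) :
    Matrix (Fin n) (Fin n) ℂ :=
  if hA : A.IsHermitian then hA.cfc (fun t => t ^ r) else 0

lemma my_abs (n : ℕ) (Z : Matrix (Fin n) (Fin n) ℂ) :
    (matAbs Z).PosSemidef ∧ matAbs Z * matAbs Z = Zᴴ * Z := by
  have h := Matrix.posSemidef_conjTranspose_mul_self Z
  have hU : (star h.1.eigenvectorUnitary : Matrix (Fin n) (Fin n) ℂ) *
      (h.1.eigenvectorUnitary : Matrix (Fin n) (Fin n) ℂ) = 1 := Unitary.coe_star_mul_self _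
  constructor
  · unfold matAbs Matrix.PosSemidef.sqrt
    refine Matrix.PosSemidef.mul_mul_conjTranspose_same ?_ _
    refine Matrix.PosSemidef.diagonal ?_
    intro i
    simpa using Real.sqrt_nonneg _
  · unfold matAbs Matrix.PosSemidef.sqrt
    conv_rhs => rw [h.1.spectral_theorem, Unitary.conjStarAlgAut_apply]
    set U := (h.1.eigenvectorUnitary : Matrix (Fin n) (Fin n) ℂ)
    set D := (diagonal ((RCLike.ofReal : ℝ → ℂ) ∘ Real.sqrt ∘ h.1.eigenvalues) :
      Matrix (Fin n) (Fin n) ℂ) with hD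
    have : D * D = diagonal ((RCLike.ofReal : ℝ → ℂ) ∘ h.1.eigenvalues) := by
      rw [hD, diagonal_mul_diagonal]
      congr 1
      funext i
      simp only [Function.comp]
      rw [← RCLike.ofReal_mul, Real.mul_self_sqrt (h.eigenvalues_nonneg i)]
    rw [← this]
    calc U * D * star U * (U * D * star U) = U * D * (star U * U) * D * star U := by
          simp only [mul_assoc]
      _ = _ := by rw [hU]; simp only [mul_assoc, one_mul, mul_one]

lemma my_spec (n : ℕ) (A : Matrix (Fin n) (Fin n) ℂ) (hA : A.PosSemidef) :
    ∃ (P : Matrix (Fin n) (Fin n) ℂ) (a : Fin n → ℝ), Pᴴ * P = 1 ∧ P * Pᴴ = 1 ∧ (∀ i, 0 ≤ a i) ∧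
      A = P * diagonal (fun i => (a i : ℂ)) * Pᴴ ∧
      ∀ r, matRpow A r = P * diagonal (fun i => ((a i ^ r : ℝ) : ℂ)) * Pᴴ := by
  refine ⟨hA.1.eigenvectorUnitary, hA.1.eigenvalues, Unitary.coe_star_mul_self _,
    Unitary.coe_mul_star_self _, hA.eigenvalues_nonneg, ?_, ?_⟩
  · conv_lhs => rw [hA.1.spectral_theorem, Unitary.conjStarAlgAut_apply]
    rfl
  · intro r
    rw [matRpow, dif_pos hA.1, Matrix.IsHermitian.cfc, Unitary.conjStarAlgAut_apply]
    rfl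

lemma my_polar (n : ℕ) (Z A : Matrix (Fin n) (Fin n) ℂ) (h : Zᴴ * Z = Aᴴ * A) :
    ∃ W : Matrix (Fin n) (Fin n) ℂ, Wᴴ * W = 1 ∧ W * Wᴴ = 1 ∧ Z = W * A := by
  let V := EuclideanSpace ℂ (Fin n)
  let z : V →ₗ[ℂ] V := Matrix.toEuclideanLin Z
  let f : V →ₗ[ℂ] V := Matrix.toEuclideanLin A
  have key : ∀ (B : Matrix (Fin n) (Fin n) ℂ) (v : V), inner ℂ (Matrix.toEuclideanLin B v)
      (Matrix.toEuclideanLin B v) = inner ℂ v (Matrix.toEuclideanLin (Bᴴ * B) v) := by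
    intro B v
    rw [← LinearMap.adjoint_inner_right, ← Matrix.toEuclideanLin_conjTranspose_eq_adjoint]
    simp [Matrix.toLpLin_apply, Matrix.mulVec_mulVec]
  have hn : ∀ v, ‖z v‖ = ‖f v‖ := by
    intro v
    have : inner ℂ (z v) (z v) = inner ℂ (f v) (f v) := by
      simp only [z, f]; rw [key, key, h]
    rw [inner_self_eq_norm_sq_to_K, inner_self_eq_norm_sq_to_K] at this
    have h2 : ‖z v‖ ^ 2 = ‖f v‖ ^ 2 := by exact_mod_cast this
    exact (sq_eq_sq₀ (norm_nonneg _) (norm_nonneg _)).1 h2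
  obtain ⟨g, hg⟩ := f.rangeRestrict.exists_rightInverse_of_surjective f.range_rangeRestrict
  have hg' : ∀ s, f (g s) = s := fun s => congrArg Subtype.val (LinearMap.congr_fun hg s)
  let L : LinearMap.range f →ₗᵢ[ℂ] V := ⟨z ∘ₗ g, by
    intro s
    rw [LinearMap.comp_apply, hn, hg']; rfl⟩
  have hL : ∀ v, L.extend (f v) = z v := by
    intro v
    have := L.extend_apply ⟨f v, LinearMap.mem_range_self f v⟩
    simp only at this
    rw [this]
    change z (g _) = z v
    rw [← sub_eq_zero, ← map_sub, ← norm_eq_zero, hn, map_sub, hg', sub_self, norm_zero]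
  let W := Matrix.toEuclideanLin.symm L.extend.toLinearMap
  have hW : Matrix.toEuclideanLin W = L.extend.toLinearMap := by simp [W]
  have hWW : Wᴴ * W = 1 := by
    apply Matrix.toEuclideanLin.injective
    apply LinearMap.ext
    intro v
    apply ext_inner_left ℂ
    intro w
    have : Matrix.toEuclideanLin (Wᴴ * W) v
      = LinearMap.adjoint (Matrix.toEuclideanLin W) (Matrix.toEuclideanLin W v) := by
      rw [← Matrix.toEuclideanLin_conjTranspose_eq_adjoint]
      simp [Matrix.toLpLin_apply, Matrix.mulVec_mulVec]
    rw [this, LinearMap.adjoint_inner_right, hW]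
    simp [Matrix.toLpLin_apply]
  refine ⟨W, hWW, mul_eq_one_comm.1 hWW, ?_⟩
  apply Matrix.toEuclideanLin.injective
  apply LinearMap.ext
  intro v
  have : Matrix.toEuclideanLin (W * A) v
      = (Matrix.toEuclideanLin W) (Matrix.toEuclideanLin A v) := by
      simp [Matrix.toLpLin_apply, Matrix.mulVec_mulVec]
  rw [this, hW]
  exact (hL v).symm

lemma my_sqrt_unique (n : ℕ) (A B : Matrix (Fin n) (Fin n) ℂ) (hA : A.PosSemidef)
    (hB : B.PosSemidef) (h : A * A = B * B) : A = B := by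
  open scoped MatrixOrder Matrix.Norms.L2Operator in
  exact (CFC.mul_self_eq_mul_self_iff A B (Matrix.nonneg_iff_posSemidef.2 hA)
    (Matrix.nonneg_iff_posSemidef.2 hB)).1 h

lemma my_young (p q : ℝ) (hp : 0 < p) (hq : 0 < q)
    (hpq : 1 / p + 1 / q = 1) (a b : ℝ) (ha : 0 ≤ a) (hb : 0 ≤ b) :
    a * b ≤ p⁻¹ * a ^ p + q⁻¹ * b ^ q ∧
    (a * b = p⁻¹ * a ^ p + q⁻¹ * b ^ q → a ^ p = b ^ q) := by
  have h1 : (a ^ p) ^ p⁻¹ = a := Real.rpow_rpow_inv ha hp.ne'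
  have h2 : (b ^ q) ^ q⁻¹ = b := Real.rpow_rpow_inv hb hq.ne'
  have hpq' : p⁻¹ + q⁻¹ = 1 := by simpa using hpq
  have ha' : 0 ≤ a ^ p := Real.rpow_nonneg ha _
  have hb' : 0 ≤ b ^ q := Real.rpow_nonneg hb _
  constructor
  · have := Real.geom_mean_le_arith_mean2_weighted (inv_pos.2 hp).le (inv_pos.2 hq).le ha' hb' hpq'
    rwa [h1, h2] at this
  · have := Real.geom_mean_eq_arith_mean2_weighted_iff_of_pos (inv_pos.2 hp) (inv_pos.2 hq) ha' hb' hpq'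
    rw [h1, h2] at this
    exact this.1

lemma my_row (n : ℕ) (M : Matrix (Fin n) (Fin n) ℂ) (h : M * Mᴴ = 1) (i : Fin n) :
    ∑ j, ‖M i j‖ ^ 2 = 1 := by
  have := congrFun (congrFun h i) i
  simp only [Matrix.mul_apply, Matrix.conjTranspose_apply, Matrix.one_apply_eq, RCLike.star_def,
    Complex.mul_conj'] at this
  exact_mod_cast this

lemma my_col (n : ℕ) (M : Matrix (Fin n) (Fin n) ℂ) (h : Mᴴ * M = 1) (j : Fin n) :
    ∑ i, ‖M i j‖ ^ 2 = 1 := by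
  have := my_row n Mᴴ (by simpa using h) j
  simpa using this

/-- core inequality -/
lemma my_core (n : ℕ) (p q : ℝ) (hp : 0 < p) (hq : 0 < q)
    (hpq : 1 / p + 1 / q = 1) (a b : Fin n → ℝ) (ha : ∀ i, 0 ≤ a i) (hb : ∀ i, 0 ≤ b i)
    (M N : Matrix (Fin n) (Fin n) ℂ) (hM : Mᴴ * M = 1) (hM' : M * Mᴴ = 1)
    (hN : Nᴴ * N = 1) (hN' : N * Nᴴ = 1)
    (h : (M * diagonal (fun i => (a i : ℂ)) * N * diagonal (fun i => (b i : ℂ))).trace =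
      ((p⁻¹ * ∑ i, a i ^ p + q⁻¹ * ∑ j, b j ^ q : ℝ) : ℂ)) (i j : Fin n) (hij : N i j ≠ 0) :
    a i ^ p = b j ^ q := by
  let D : Fin n → Fin n → ℝ := fun i j => (‖M j i‖ ^ 2 + ‖N i j‖ ^ 2) / 2
  have hD0 : ∀ i j, 0 ≤ D i j := fun i j => by positivity
  have hDr : ∀ i, ∑ j, D i j = 1 := by
    intro i
    simp only [D]
    rw [← Finset.sum_div, Finset.sum_add_distrib, my_col n M hM, my_row n N hN']; norm_num
  have hDc : ∀ j, ∑ i, D i j = 1 := by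
    intro i
    simp only [D]
    rw [← Finset.sum_div, Finset.sum_add_distrib, my_row n M hM', my_col n N hN]; norm_num
  have hR : p⁻¹ * ∑ i, a i ^ p + q⁻¹ * ∑ j, b j ^ q =
      ∑ i, ∑ j, D i j * (p⁻¹ * a i ^ p + q⁻¹ * b j ^ q) := by
    simp only [mul_add, Finset.sum_add_distrib]
    congr 1
    · rw [Finset.mul_sum]
      refine Finset.sum_congr rfl fun i _ => ?_
      rw [← Finset.sum_mul, hDr, one_mul]
    · rw [Finset.sum_comm, Finset.mul_sum]
      refine Finset.sum_congr rfl fun i _ => ?_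
      rw [← Finset.sum_mul, hDc, one_mul]
  have hT : (M * diagonal (fun i => (a i : ℂ)) * N * diagonal (fun i => (b i : ℂ))).trace
      = ∑ i, ∑ j, M j i * a i * N i j * b j := by
    simp only [Matrix.trace, Matrix.diag_apply, Matrix.mul_diagonal]
    rw [Finset.sum_comm]
    refine Finset.sum_congr rfl fun j _ => ?_
    rw [Matrix.mul_apply, Finset.sum_mul]
    simp only [Matrix.mul_diagonal]
  have hle : p⁻¹ * ∑ i, a i ^ p + q⁻¹ * ∑ j, b j ^ q ≤ ∑ i, ∑ j, D i j * (a i * b j) := by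
    have h0 := congrArg Complex.re h
    rw [hT, Complex.ofReal_re] at h0
    rw [← h0]
    simp only [Complex.re_sum]
    refine Finset.sum_le_sum fun i _ => Finset.sum_le_sum fun j _ => ?_
    refine (Complex.re_le_norm _).trans ?_
    simp only [norm_mul, Complex.norm_real, Real.norm_of_nonneg (ha _), Real.norm_of_nonneg (hb _)]
    have h3 : ‖M j i‖ * ‖N i j‖ ≤ D i j := by
      simp only [D]; nlinarith [sq_nonneg (‖M j i‖ - ‖N i j‖)]
    calc _ = (‖M j i‖ * ‖N i j‖) * (a i * b j) := by ring
      _ ≤ _ := mul_le_mul_of_nonneg_right h3 (mul_nonneg (ha _) (hb _))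
  have hY := fun i j => my_young p q hp hq hpq (a i) (b j) (ha i) (hb j)
  have hterm : ∀ i j, D i j * (a i * b j) ≤ D i j * (p⁻¹ * a i ^ p + q⁻¹ * b j ^ q) :=
    fun i j => mul_le_mul_of_nonneg_left (hY i j).1 (hD0 i j)
  rw [hR] at hle
  have heq := le_antisymm hle
    (Finset.sum_le_sum fun i _ => Finset.sum_le_sum fun j _ => hterm i j)
  have e1 := (Finset.sum_eq_sum_iff_of_le
    (fun i _ => Finset.sum_le_sum fun j _ => hterm i j)).1 heq.symm i (Finset.mem_univ _)
  have e2 := (Finset.sum_eq_sum_iff_of_le (fun j _ => hterm i j)).1 e1 j (Finset.mem_univ _)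
  have hDp : D i j ≠ 0 := by
    have : 0 < ‖N i j‖ := norm_pos_iff.2 hij
    have : 0 < D i j := by simp only [D]; positivity
    exact this.ne'
  exact (hY i j).2 (mul_left_cancel₀ hDp e2)

/-- intertwining -/
lemma my_inter (n : ℕ) (P Q : Matrix (Fin n) (Fin n) ℂ) (c d : Fin n → ℂ)
    (hP : Pᴴ * P = 1) (hP' : P * Pᴴ = 1) (hQ : Qᴴ * Q = 1) (hQ' : Q * Qᴴ = 1) :
    Q * diagonal d * Qᴴ = P * diagonal c * Pᴴ ↔ ∀ i j, (Pᴴ * Q) i j ≠ 0 → c i = d j := by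
  have h1 : Q * diagonal d * Qᴴ = P * diagonal c * Pᴴ ↔
      (Pᴴ * Q) * diagonal d = diagonal c * (Pᴴ * Q) := by
    constructor
    · intro h
      calc _ = Pᴴ * (Q * diagonal d * Qᴴ) * Q := by simp only [mul_assoc, hQ, mul_one]
        _ = (Pᴴ * P) * diagonal c * Pᴴ * Q := by rw [h]; simp only [mul_assoc]
        _ = _ := by rw [hP]; simp only [mul_assoc, one_mul]
    · intro h
      calc _ = (P * Pᴴ) * (Q * diagonal d * Qᴴ) := by rw [hP', one_mul]
        _ = P * (Pᴴ * Q * diagonal d) * Qᴴ := by simp only [mul_assoc]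
        _ = _ := by rw [h]; simp only [mul_assoc, hQ', mul_one]
  rw [h1]
  constructor
  · intro h i j hij
    have := congrFun (congrFun h i) j
    rw [mul_diagonal, diagonal_mul, mul_comm] at this
    exact (mul_right_cancel₀ hij this).symm
  · intro h
    ext i j
    rw [mul_diagonal, diagonal_mul, mul_comm]
    by_cases hij : (Pᴴ * Q) i j = 0
    · simp [hij]
    · rw [h i j hij]

/-- **Equality, up to a unitary, in the matrix Young inequality.** -/
theorem matrix_young_equality_iff {n : ℕ} (p q : ℝ) (hp : 0 < p) (hq : 0 < q)
    (hpq : 1 / p + 1 / q = 1) (X Y : Matrix (Fin n) (Fin n) ℂ) :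
    (∃ U : Matrix (Fin n) (Fin n) ℂ, Uᴴ * U = 1 ∧
        U * matAbs (X * Yᴴ) * Uᴴ =
          (p⁻¹ : ℂ) • matRpow (matAbs X) p + (q⁻¹ : ℂ) • matRpow (matAbs Y) q) ↔
      matRpow (matAbs Y) q = matRpow (matAbs X) p := by
  obtain ⟨hA, hAA⟩ := my_abs n X
  obtain ⟨hB, hBB⟩ := my_abs n Y
  obtain ⟨hC, hCC⟩ := my_abs n (X * Yᴴ)
  set A := matAbs X
  set B := matAbs Y
  set C := matAbs (X * Yᴴ)
  obtain ⟨V, hV, hV', hX⟩ := my_polar n X A (by rw [hA.1.eq, hAA])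
  obtain ⟨W, hW, hW', hY⟩ := my_polar n Y B (by rw [hB.1.eq, hBB])
  obtain ⟨P, a, hP, hP', ha, hAe, hAp⟩ := my_spec n A hA
  obtain ⟨Q, b, hQ, hQ', hb, hBe, hBp⟩ := my_spec n B hB
  have hpq' : (p⁻¹ : ℂ) + (q⁻¹ : ℂ) = 1 := by
    have : p⁻¹ + q⁻¹ = 1 := by simpa using hpq
    exact_mod_cast this
  have hXY : X * Yᴴ = V * (A * B) * Wᴴ := by
    rw [hX, hY, conjTranspose_mul, hB.1.eq]; simp only [mul_assoc]
  rw [hAp, hBp]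
  constructor
  · rintro ⟨U, hU, h⟩
    obtain ⟨T, hT, hT', hTC⟩ := my_polar n (X * Yᴴ) C (by rw [hC.1.eq, hCC])
    have hCe : C = Tᴴ * (V * (A * B) * Wᴴ) := by
      rw [← hXY, hTC, ← mul_assoc, hT, one_mul]
    have htr := congrArg Matrix.trace h
    rw [Matrix.trace_mul_cycle, hU, one_mul] at htr
    rw [my_inter n P Q _ _ hP hP' hQ hQ']
    intro i j hij
    have hMm : (Qᴴ * Wᴴ * Tᴴ * V * P)ᴴ * (Qᴴ * Wᴴ * Tᴴ * V * P) = 1 := by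
      simp only [conjTranspose_mul, conjTranspose_conjTranspose]
      calc _ = Pᴴ * (Vᴴ * (T * (W * (Q * Qᴴ) * Wᴴ) * Tᴴ) * V) * P := by simp only [mul_assoc]
        _ = 1 := by simp only [hQ', mul_one, hW', hT', hV, hP]
    have hNn : (Pᴴ * Q)ᴴ * (Pᴴ * Q) = 1 := by
      simp only [conjTranspose_mul, conjTranspose_conjTranspose]
      calc _ = Qᴴ * (P * Pᴴ) * Q := by simp only [mul_assoc]
        _ = 1 := by simp only [hP', mul_one, hQ]
    have := my_core n p q hp hq hpq a b ha hb (Qᴴ * Wᴴ * Tᴴ * V * P) (Pᴴ * Q)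
      hMm (mul_eq_one_comm.1 hMm) hNn (mul_eq_one_comm.1 hNn) ?_ i j hij
    · rw [this]
    · have e1 : Matrix.trace C = (Qᴴ * Wᴴ * Tᴴ * V * P * diagonal (fun i => (a i : ℂ)) * (Pᴴ * Q) *
          diagonal (fun i => (b i : ℂ))).trace := by
        rw [hCe]
        calc _ = ((Tᴴ * V * P * diagonal (fun i => (a i : ℂ)) * (Pᴴ * Q) *
              diagonal (fun i => (b i : ℂ))) * (Qᴴ * Wᴴ)).trace := by
                rw [hAe, hBe]; simp only [mul_assoc]
          _ = _ := by rw [Matrix.trace_mul_comm]; simp only [mul_assoc]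
      rw [← e1, htr, Matrix.trace_add, Matrix.trace_smul, Matrix.trace_smul,
        Matrix.trace_mul_cycle, hP, Matrix.trace_mul_cycle Q, hQ]
      simp [Matrix.trace_diagonal]
  · intro h
    have h0 := h
    rw [my_inter n P Q _ _ hP hP' hQ hQ'] at h
    have hAB : A * B = P * diagonal (fun i => ((a i ^ p : ℝ) : ℂ)) * Pᴴ := by
      have : diagonal (fun i => (a i : ℂ)) * (Pᴴ * Q) * diagonal (fun i => (b i : ℂ)) =
          diagonal (fun i => ((a i ^ p : ℝ) : ℂ)) * (Pᴴ * Q) := by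
        ext i j
        rw [mul_diagonal, diagonal_mul, diagonal_mul]
        by_cases hij : (Pᴴ * Q) i j = 0
        · simp [hij]
        · have e := h i j hij
          have e' : a i ^ p = b j ^ q := by exact_mod_cast e
          have e3 : b j = a i ^ (p - 1) := by
            rw [← Real.rpow_rpow_inv (hb j) hq.ne', ← e', ← Real.rpow_mul (ha i)]
            congr 1
            field_simp
            field_simp at hpq
            linarith
          have e4 : a i * b j = a i ^ p := by
            rw [e3]
            rcases (ha i).eq_or_lt with h0 | h0
            · rw [← h0, zero_mul, Real.zero_rpow hp.ne']
            · rw [Real.rpow_sub_one h0.ne']; field_simp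
          rw [← e4]; push_cast; ring
      calc A * B = P * (diagonal (fun i => (a i : ℂ)) * (Pᴴ * Q) *
            diagonal (fun i => (b i : ℂ))) * Qᴴ := by
              rw [hAe, hBe]; simp only [mul_assoc]
        _ = P * diagonal (fun i => ((a i ^ p : ℝ) : ℂ)) * Pᴴ * (Q * Qᴴ) := by
              rw [this]; simp only [mul_assoc]
        _ = _ := by rw [hQ', mul_one]
    set R := P * diagonal (fun i => ((a i ^ p : ℝ) : ℂ)) * Pᴴ with hRdef
    have hR : R.PosSemidef := by
      refine Matrix.PosSemidef.mul_mul_conjTranspose_same ?_ _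
      refine Matrix.PosSemidef.diagonal ?_
      intro i
      simpa only [Pi.zero_apply, Complex.zero_le_real] using Real.rpow_nonneg (ha i) p
    have hCR : C = W * R * Wᴴ := by
      apply my_sqrt_unique n _ _ hC (hR.mul_mul_conjTranspose_same W)
      rw [hCC, hXY, hAB]
      simp only [conjTranspose_mul, conjTranspose_conjTranspose, hR.1.eq]
      calc _ = W * R * (Vᴴ * V) * R * Wᴴ := by simp only [mul_assoc]
        _ = W * R * (Wᴴ * W) * R * Wᴴ := by rw [hV, hW]
        _ = _ := by simp only [mul_assoc]
    refine ⟨Wᴴ, by simpa using hW', ?_⟩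
    rw [h0, ← add_smul, hpq', one_smul, hCR, conjTranspose_conjTranspose]
    calc _ = (Wᴴ * W) * R * (Wᴴ * W) := by simp only [mul_assoc]
      _ = _ := by rw [hW, one_mul, mul_one]
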